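/- With Ai(a;b) := q^{−v(a)/3} ∫_{t∈O} ψ(a t³ + b t) dt and v(a) < 0: if v(b) ≥ (1/3) v(a), then |Ai(a;b)| ≤ q^{1 + v(3)}. -/

import Mathlib

open MeasureTheory

/-!
Write `O` for the valuation ring and `f t = ψ (a t³ + b t)`. On the shell `v t = j` with
`v a + 3 v 3 + 3 (j + 1) ≤ 0`, the derivative `3 a t² + b` has the constant valuation
`v 3 + v a + 2 j`, because `b` is too small to matter. Translating `t` by an `s` which is small, but
not small enough for the derivative not to see it, multiplies `f t` by the value of a nontrivial
character of the residue field, so the integral over such a shell vanishes. What remains is the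
integral over a ball of radius about `q ^ (v a / 3 + v 3)`, which is bounded by its measure.

As `O`, `ψ` and the translations may fail to be measurable, the measure is pulled back to the type
of elements of `O`, with its Carathéodory σ-algebra, for which translations are measurable.
If `f` is not almost everywhere measurable, its integral is `0` by convention. Otherwise the second
differences of `f` are measurable characters `t ↦ ψ (6 a c t)`; their kernels are measurable
subgroups of positive measure, hence of finite index. This gives the measurability of the balls, the
finiteness of the residue field, and the bound `‖f t‖ = 1`.
-/

section OuterPullback

variable {X Y : Type*} [MeasurableSpace Y]

/-- The Carathéodory σ-algebra of the outer measure `s ↦ μ (f '' s)`. -/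
@[reducible] noncomputable def caratheodoryComap (μ : Measure Y) (f : X → Y) : MeasurableSpace X :=
  (OuterMeasure.comap f μ.toOuterMeasure).caratheodory

/-- The pullback `s ↦ μ (f '' s)` of a measure, on its Carathéodory σ-algebra. In contrast to
`Measure.comap`, images of measurable sets need not be null measurable, so that a measure can be
restricted to a subtype which is not measurable. -/
noncomputable def outerComap (μ : Measure Y) (f : X → Y) : @Measure X (caratheodoryComap μ f) :=
  @OuterMeasure.toMeasure X (caratheodoryComap μ f) (OuterMeasure.comap f μ.toOuterMeasure) le_rfl

variable (μ : Measure Y) (f : X → Y)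

theorem measurable_caratheodoryComap : Measurable[caratheodoryComap μ f] f := by
  intro A hA
  rw [OuterMeasure.isCaratheodory_iff]
  intro t
  simp only [OuterMeasure.comap_apply, Measure.coe_toOuterMeasure]
  have hsdiff : f '' (t \ f ⁻¹' A) = f '' t \ A := by
    rw [Set.sdiff_eq, ← Set.preimage_compl, Set.image_inter_preimage, ← Set.sdiff_eq]
  rw [Set.image_inter_preimage, hsdiff, measure_inter_add_sdiff _ hA]

theorem outerComap_apply (s : Set X) : outerComap μ f s = μ (f '' s) := by
  let := caratheodoryComap μ f
  set o := OuterMeasure.comap f μ.toOuterMeasure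
  refine le_antisymm ?_ (le_toMeasure_apply o le_rfl s)
  calc outerComap μ f s
      ≤ outerComap μ f (f ⁻¹' toMeasurable μ (f '' s)) :=
        measure_mono (Set.image_subset_iff.mp (subset_toMeasurable _ _))
    _ = μ (f '' (f ⁻¹' toMeasurable μ (f '' s))) :=
        toMeasure_apply o le_rfl
          (measurable_caratheodoryComap μ f (measurableSet_toMeasurable _ _))
    _ ≤ μ (toMeasurable μ (f '' s)) := measure_mono (Set.image_preimage_subset _ _)
    _ = μ (f '' s) := measure_toMeasurable _

theorem map_outerComap :
    @Measure.map X Y (caratheodoryComap μ f) _ f (outerComap μ f) =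
      μ.restrict (Set.range f) := by
  let := caratheodoryComap μ f
  ext A hA
  rw [Measure.map_apply (measurable_caratheodoryComap μ f) hA, outerComap_apply,
    Set.image_preimage_eq_inter_range, Measure.restrict_apply hA]

theorem isComplete_outerComap : (outerComap μ f).IsComplete := by
  refine ⟨fun s hs ↦ (OuterMeasure.isCaratheodory_iff_le _).mpr fun t ↦ ?_⟩
  rw [outerComap_apply] at hs
  have hinter : OuterMeasure.comap f μ.toOuterMeasure (t ∩ s) = 0 :=
    measure_mono_null Set.inter_subset_right hs
  rw [hinter, zero_add]
  exact measure_mono Set.sdiff_subset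

end OuterPullback

section InvariantOuterPullback

variable {G X : Type*} [AddCommGroup G] [AddCommGroup X] [MeasurableSpace X] {μ : Measure X}

theorem measure_image_preimage_add_left (hμ : ∀ (a : X) (s : Set X), μ ((a + ·) ⁻¹' s) = μ s)
    (ι : G →+ X) (g : G) (s : Set G) : μ (ι '' ((g + ·) ⁻¹' s)) = μ (ι '' s) := by
  have himage : ι '' ((g + ·) ⁻¹' s) = (ι g + ·) ⁻¹' (ι '' s) := by
    simp only [← Set.image_add_left', Set.image_image, map_add, map_neg]
  rw [himage, hμ]

theorem measurableAdd_caratheodoryComap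
    (hμ : ∀ (a : X) (s : Set X), μ ((a + ·) ⁻¹' s) = μ s) (ι : G →+ X) :
    @MeasurableAdd G (caratheodoryComap μ ι) _ := by
  let := caratheodoryComap μ ι
  have hadd (g : G) : Measurable (g + ·) := by
    intro s hs
    refine (OuterMeasure.isCaratheodory_iff _).mpr fun t ↦ ?_
    have hshift := (OuterMeasure.isCaratheodory_iff _).mp hs ((-g + ·) ⁻¹' t)
    simp only [OuterMeasure.comap_apply, Measure.coe_toOuterMeasure] at hshift ⊢
    rw [measure_image_preimage_add_left hμ, ← measure_image_preimage_add_left hμ ι g (_ ∩ _),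
      ← measure_image_preimage_add_left hμ ι g (_ \ _)] at hshift
    simpa [Set.preimage_preimage, Set.preimage_inter, Set.preimage_sdiff] using hshift
  exact ⟨hadd, fun g ↦ by simpa only [add_comm] using hadd g⟩

theorem isAddLeftInvariant_outerComap
    (hμ : ∀ (a : X) (s : Set X), μ ((a + ·) ⁻¹' s) = μ s) (ι : G →+ X) :
    @Measure.IsAddLeftInvariant G (caratheodoryComap μ ι) _ (outerComap μ ι) := by
  let := caratheodoryComap μ ι
  have := measurableAdd_caratheodoryComap hμ ι
  refine ⟨fun g ↦ ?_⟩
  ext s hs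
  rw [Measure.map_apply (measurable_const_add g) hs, outerComap_apply, outerComap_apply,
    measure_image_preimage_add_left hμ]

end InvariantOuterPullback

section FiniteIndex

variable {G : Type*} [AddGroup G] [MeasurableSpace G] [MeasurableAdd G] (ν : Measure G)
  [IsFiniteMeasure ν] [ν.IsAddLeftInvariant]

theorem finiteIndex_of_measure_pos {K : AddSubgroup G} (hK : MeasurableSet (K : Set G))
    (hpos : 0 < ν K) : K.FiniteIndex := by
  have hfiber (x : G ⧸ K) :
      (QuotientAddGroup.mk ⁻¹' {x} : Set G) = (-x.out + ·) ⁻¹' (K : Set G) := by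
    ext y
    simp only [Set.mem_preimage, Set.mem_singleton_iff, SetLike.mem_coe]
    rw [← QuotientAddGroup.eq, QuotientAddGroup.out_eq', eq_comm]
  have hfinite := Measure.finite_const_le_meas_of_disjoint_iUnion ν hpos
    (As := fun x : G ⧸ K ↦ (QuotientAddGroup.mk ⁻¹' {x} : Set G))
    (fun x ↦ by rw [hfiber]; exact measurable_const_add _ hK)
    (fun x y hxy ↦ Disjoint.preimage _ (by simpa using hxy)) (measure_ne_top _ _)
  simp only [hfiber, measure_preimage_add, le_refl, Set.ofPred_true] at hfinite
  have : Finite (G ⧸ K) := Set.finite_univ_iff.mp hfinite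
  exact AddSubgroup.finiteIndex_of_finite_quotient

variable {H : AddSubgroup G}

theorem index_le_measure_univ_div {K : AddSubgroup G} (hK : MeasurableSet (K : Set G))
    (hpos : 0 < ν H) (hHK : H ≤ K) : (K.index : ENNReal) ≤ ν Set.univ / ν H := by
  have := finiteIndex_of_measure_pos ν hK (hpos.trans_le (measure_mono hHK))
  rw [ENNReal.le_div_iff_mul_le (.inl hpos.ne') (.inl (measure_ne_top _ _)),
    ← K.index_mul_measure hK ν]
  gcongr

theorem exists_isLeast_measurableSet_addSubgroup (hpos : 0 < ν H) :
    ∃ K : AddSubgroup G, IsLeast {L : AddSubgroup G | MeasurableSet (L : Set G) ∧ H ≤ L} K := by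
  obtain ⟨N, hN⟩ := ENNReal.exists_nat_gt (ENNReal.div_ne_top (measure_ne_top ν Set.univ) hpos.ne')
  let S : Set (AddSubgroup G) := {L | MeasurableSet (L : Set G) ∧ H ≤ L}
  have hbdd : BddAbove (AddSubgroup.index '' S) := by
    refine ⟨N, ?_⟩
    rintro _ ⟨L, ⟨hL, hHL⟩, rfl⟩
    exact_mod_cast (index_le_measure_univ_div ν hL hpos hHL).trans hN.le
  obtain ⟨K, ⟨hK, hHK⟩, hmax⟩ : sSup (AddSubgroup.index '' S) ∈ AddSubgroup.index '' S :=
    Nat.sSup_mem ⟨_, ⊤, ⟨by simp, le_top⟩, rfl⟩ hbdd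
  refine ⟨K, ⟨hK, hHK⟩, fun L ⟨hL, hHL⟩ ↦ inf_eq_left.mp ?_⟩
  have hKL : K ⊓ L ∈ S := ⟨hK.inter hL, le_inf hHK hHL⟩
  have := finiteIndex_of_measure_pos ν hKL.1 (hpos.trans_le (measure_mono hKL.2))
  by_contra hne
  have hlt : K.index < (K ⊓ L).index :=
    AddSubgroup.index_strictAnti (inf_le_left.lt_of_ne hne)
  exact hlt.not_ge (hmax ▸ le_csSup hbdd ⟨_, hKL, rfl⟩)

theorem measurableSet_addSubgroup_of_separated (hpos : 0 < ν H)
    (hsep : ∀ t ∉ H, ∃ K : AddSubgroup G, MeasurableSet (K : Set G) ∧ H ≤ K ∧ t ∉ K) :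
    MeasurableSet (H : Set G) := by
  obtain ⟨K, ⟨hK, hHK⟩, hleast⟩ := exists_isLeast_measurableSet_addSubgroup ν hpos
  suffices K ≤ H from le_antisymm this hHK ▸ hK
  intro t ht
  by_contra htH
  obtain ⟨L, hL, hHL, htL⟩ := hsep t htH
  exact htL (hleast ⟨hL, hHL⟩ ht)

end FiniteIndex

theorem setIntegral_eq_zero_of_sum_translates_eq_zero {G E ι : Type*} [AddGroup G]
    [MeasurableSpace G] [MeasurableAdd G] [NormedAddCommGroup E] [NormedSpace ℝ E]
    {ν : Measure G} [ν.IsAddRightInvariant] [Fintype ι] [Nonempty ι] {f : G → E}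
    (hf : Integrable f ν) {S : Set G} (hS : MeasurableSet S) (s : ι → G)
    (hSs : ∀ i t, t + s i ∈ S ↔ t ∈ S) (hsum : ∀ t ∈ S, ∑ i, f (t + s i) = 0) :
    ∫ t in S, f t ∂ν = 0 := by
  have htranslate (i : ι) : ∫ t in S, f (t + s i) ∂ν = ∫ t in S, f t ∂ν := by
    rw [← integral_indicator hS, ← integral_indicator hS,
      ← integral_add_right_eq_self (S.indicator f) (s i)]
    exact integral_congr_ae (.of_forall fun t ↦ by by_cases ht : t ∈ S <;> simp [ht, hSs])
  have htotal : ∑ i, ∫ t in S, f (t + s i) ∂ν = 0 := by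
    rw [← integral_finsetSum _ fun i _ ↦ (hf.comp_add_right (s i)).integrableOn]
    exact setIntegral_eq_zero_of_forall_eq_zero hsum
  simp only [htranslate, Finset.sum_const, Finset.card_univ, ← Nat.cast_smul_eq_nsmul ℝ] at htotal
  exact (smul_eq_zero.mp htotal).resolve_left (Nat.cast_ne_zero.mpr Fintype.card_ne_zero)

theorem norm_addChar_eq_one_of_finiteIndex_ker {G : Type*} [AddGroup G] (χ : AddChar G ℂ)
    (hχ : χ.toAddMonoidHom.ker.FiniteIndex) (g : G) : ‖χ g‖ = 1 := by
  have hmem : χ (χ.toAddMonoidHom.ker.index • g) = 1 :=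
    AddSubgroup.nsmul_index_mem χ.toAddMonoidHom.ker g
  rw [AddChar.map_nsmul_eq_pow] at hmem
  exact Complex.norm_eq_one_of_pow_eq_one hmem hχ.index_ne_zero

theorem sum_addChar_quotient_out_eq_zero {G R : Type*} [AddCommGroup G] [CommRing R] [IsDomain R]
    (K : AddSubgroup G) [Fintype (G ⧸ K)] {χ : AddChar G R} (hK : ∀ x ∈ K, χ x = 1)
    (hχ : ∃ x, χ x ≠ 1) : ∑ r : G ⧸ K, χ r.out = 0 := by
  let χK : AddChar (G ⧸ K) R :=
    AddChar.toAddMonoidHomEquiv.symm (QuotientAddGroup.lift K χ.toAddMonoidHom hK)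
  have hχK (g : G) : χK g = χ g := rfl
  obtain ⟨x, hx⟩ := hχ
  have hχK_ne : χK ≠ 0 := AddChar.ne_zero_iff.mpr ⟨x, hx⟩
  have hsum : ∑ r, χK r = 0 := by classical rw [AddChar.sum_eq_ite, if_neg hχK_ne]
  rw [← hsum]
  exact Finset.sum_congr rfl fun r _ ↦ by rw [← hχK, QuotientAddGroup.out_eq']

section ValuationBall

variable {R : Type*} [Ring R] (w : AddValuation R (WithTop ℤ))

/-- The additive subgroup of elements of valuation at least `n`; it is the valuation ring for
`n = 0` and a fractional ideal in general. -/
def valuationBall (n : ℤ) : AddSubgroup R where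
  carrier := {x | (n : WithTop ℤ) ≤ w x}
  zero_mem' := by simp
  add_mem' := w.map_le_add
  neg_mem' := by simp

variable {w} {m n : ℤ} {x y : R}

theorem mem_valuationBall : x ∈ valuationBall w n ↔ (n : WithTop ℤ) ≤ w x := Iff.rfl

theorem valuationBall_anti (h : m ≤ n) : valuationBall w n ≤ valuationBall w m :=
  fun _ hx ↦ (WithTop.coe_le_coe.mpr h).trans hx

theorem mul_mem_valuationBall (hx : x ∈ valuationBall w m) (hy : y ∈ valuationBall w n) :
    x * y ∈ valuationBall w (m + n) := by
  rw [mem_valuationBall, w.map_mul, WithTop.coe_add]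
  exact add_le_add hx hy

theorem mem_valuationBall_of_eq (h : w x = n) : x ∈ valuationBall w n := h.ge

theorem natCast_mem_valuationBall (k : ℕ) : (k : R) ∈ valuationBall w 0 := by
  have hone : (1 : R) ∈ valuationBall w 0 := mem_valuationBall_of_eq (by simp)
  simpa using nsmul_mem hone k

theorem nonneg_of_addValuation_natCast_eq {k : ℕ} (h : w (k : R) = n) : 0 ≤ n :=
  WithTop.coe_le_coe.mp (h ▸ mem_valuationBall.mp (natCast_mem_valuationBall k))

theorem eq_of_mem_valuationBall_of_notMem_succ (hx : x ∈ valuationBall w n)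
    (hx' : x ∉ valuationBall w (n + 1)) : w x = n := by
  rw [mem_valuationBall] at hx hx'
  cases h : w x with
  | top => simp [h] at hx'
  | coe k =>
    rw [h] at hx hx'
    norm_cast at hx hx' ⊢
    omega

theorem mem_valuationBall_of_pow_mem {k : ℕ} (hx : x ^ k ∈ valuationBall w m)
    (hkn : k * (n - 1) < m) : x ∈ valuationBall w n := by
  rw [mem_valuationBall, w.map_pow] at hx
  rw [mem_valuationBall]
  cases h : w x with
  | top => exact le_top
  | coe l =>
    rw [h] at hx
    norm_cast at hx ⊢
    rw [nsmul_eq_mul] at hx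
    by_contra! hl
    nlinarith [mul_le_mul_of_nonneg_left (show l ≤ n - 1 by omega) (Int.natCast_nonneg k)]

variable (w) in
/-- The part of `valuationBall w n` in the valuation ring, as a subgroup of the latter. -/
abbrev integerBall (n : ℤ) : AddSubgroup (valuationBall w 0) :=
  (valuationBall w n).addSubgroupOf (valuationBall w 0)

theorem mem_integerBall {t : valuationBall w 0} :
    t ∈ integerBall w n ↔ (t : R) ∈ valuationBall w n :=
  AddSubgroup.mem_addSubgroupOf

theorem image_coe_integerBall (hn : 0 ≤ n) :
    (valuationBall w 0).subtype '' integerBall w n = valuationBall w n := by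
  rw [← AddSubgroup.coe_map, AddSubgroup.addSubgroupOf_map_subtype,
    inf_eq_left.mpr (valuationBall_anti hn)]

end ValuationBall

section OfIntValued

variable {R : Type*} [Ring R] [IsDomain R] {v : R → ℤ}
  (hmul : ∀ x y : R, x ≠ 0 → y ≠ 0 → v (x * y) = v x + v y)
  (hadd : ∀ x y : R, x ≠ 0 → y ≠ 0 → x + y ≠ 0 → min (v x) (v y) ≤ v (x + y))

open Classical in
/-- The additive valuation which agrees away from `0` with a given integer-valued function, whose
value at `0` is replaced by `⊤`. -/
noncomputable def addValuationOfInt : AddValuation R (WithTop ℤ) :=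
  AddValuation.of (fun x ↦ if x = 0 then ⊤ else v x) (if_pos rfl)
    (by
      have h := hmul 1 1 one_ne_zero one_ne_zero
      rw [one_mul, left_eq_add] at h
      simp [h])
    (fun x y ↦ by
      by_cases hx : x = 0
      · simp [hx]
      by_cases hy : y = 0
      · simp [hy]
      by_cases hxy : x + y = 0
      · simp [hxy]
      simpa only [hx, hy, hxy, if_false, ← WithTop.coe_min, WithTop.coe_le_coe] using
        hadd x y hx hy hxy)
    (fun x y ↦ by
      by_cases hx : x = 0
      · simp [hx]
      by_cases hy : y = 0
      · simp [hy]
      simp [hx, hy, hmul x y hx hy])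

theorem addValuationOfInt_apply {x : R} (hx : x ≠ 0) : addValuationOfInt hmul hadd x = v x :=
  if_neg hx

theorem mem_valuationBall_addValuationOfInt {n : ℤ} {x : R} :
    x ∈ valuationBall (addValuationOfInt hmul hadd) n ↔ x = 0 ∨ n ≤ v x := by
  rw [mem_valuationBall]
  by_cases hx : x = 0
  · simp [hx]
  · simp [addValuationOfInt_apply hmul hadd hx, hx]

end OfIntValued

section Field

variable {F : Type*} [Field F] {w : AddValuation F (WithTop ℤ)}

theorem div_mem_valuationBall {m n : ℤ} {x y : F} (hx : x ∈ valuationBall w m) (hy : w y = n) :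
    x / y ∈ valuationBall w (m - n) := by
  rw [div_eq_mul_inv, sub_eq_add_neg]
  exact mul_mem_valuationBall hx (mem_valuationBall_of_eq (by rw [w.map_inv, hy]; rfl))

theorem ne_zero_of_addValuation_eq_coe {n : ℤ} {x : F} (hx : w x = n) : x ≠ 0 :=
  w.ne_top_iff.mp (hx ▸ WithTop.coe_ne_top)

variable (w) in
/-- The additive character `t ↦ ψ (c * t)` of the valuation ring. -/
abbrev integerChar {M : Type*} [CommMonoid M] (ψ : AddChar F M) (c : F) :
    AddChar (valuationBall w 0) M :=
  (ψ.mulShift c).compAddMonoidHom (valuationBall w 0).subtype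

end Field

/-- An additive character has conductor exactly the valuation ring of `w` if it is trivial on the
valuation ring, but not on all elements of valuation `-1`. -/
structure IsUnramifiedChar {F M : Type*} [Field F] [CommMonoid M] (w : AddValuation F (WithTop ℤ))
    (ψ : AddChar F M) : Prop where
  eq_one : ∀ x ∈ valuationBall w 0, ψ x = 1
  exists_ne_one : ∃ x, w x = (-1 : ℤ) ∧ ψ x ≠ 1

namespace IsUnramifiedChar

variable {F M : Type*} [Field F] {w : AddValuation F (WithTop ℤ)}

theorem exists_addValuation_eq_natCast [CommMonoid M] {ψ : AddChar F M} (hψ : IsUnramifiedChar w ψ)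
    (k : ℕ) : ∃ p : F, w p = (k : ℤ) := by
  obtain ⟨x, hx, -⟩ := hψ.exists_ne_one
  have hinv : w x⁻¹ = (1 : ℤ) := by rw [w.map_inv, hx]; rfl
  exact ⟨x⁻¹ ^ k, by rw [w.map_pow, hinv]; norm_cast; simp⟩

theorem exists_mul_ne_one [CommMonoid M] {ψ : AddChar F M} (hψ : IsUnramifiedChar w ψ)
    {t : F} {n : ℤ} (ht : t ∉ valuationBall w n) :
    ∃ c ∈ valuationBall w (-n), ψ (c * t) ≠ 1 := by
  obtain ⟨x, hx, hψx⟩ := hψ.exists_ne_one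
  have ht0 : t ≠ 0 := fun h ↦ ht (h ▸ zero_mem _)
  obtain ⟨k, hk⟩ := WithTop.ne_top_iff_exists.mp (w.ne_top_iff.mpr ht0)
  have hkn : k < n := by rwa [mem_valuationBall, ← hk, WithTop.coe_le_coe, not_le] at ht
  refine ⟨x / t, ?_, by rwa [div_mul_cancel₀ _ ht0]⟩
  exact valuationBall_anti (by omega)
    (div_mem_valuationBall (mem_valuationBall_of_eq hx) hk.symm)

theorem sum_residue_eq_zero [CommRing M] [IsDomain M] {ψ : AddChar F M}
    (hψ : IsUnramifiedChar w ψ) [Fintype (valuationBall w 0 ⧸ integerBall w 1)] {η : F}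
    (hη : w η = (-1 : ℤ)) :
    ∑ r : valuationBall w 0 ⧸ integerBall w 1, ψ (η * (r.out : valuationBall w 0)) = 0 := by
  refine sum_addChar_quotient_out_eq_zero (integerBall w 1) (χ := integerChar w ψ η)
    (fun t ht ↦ ?_) ?_
  · exact hψ.eq_one _ (mul_mem_valuationBall (mem_valuationBall_of_eq hη) (mem_integerBall.mp ht))
  · obtain ⟨x, hx, hψx⟩ := hψ.exists_ne_one
    refine ⟨⟨x / η, div_mem_valuationBall (mem_valuationBall_of_eq hx) hη⟩, ?_⟩
    simpa [mul_div_cancel₀ x (ne_zero_of_addValuation_eq_coe hη)] using hψx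

end IsUnramifiedChar

section CubicPhase

variable {F : Type*} [Field F] {w : AddValuation F (WithTop ℤ)} {ψ : AddChar F ℂ} {a b : F}

variable (w ψ a b) in
/-- The integrand `t ↦ ψ (a * t ^ 3 + b * t)` of the Airy function, on the valuation ring. -/
def cubicPhase (t : valuationBall w 0) : ℂ := ψ (a * (t : F) ^ 3 + b * t)

theorem cubicPhase_add (hψ : IsUnramifiedChar w ψ) {m n j k : ℤ} (h3 : (3 : F) ∈ valuationBall w m)
    (ha : a ∈ valuationBall w n) (hquad : 0 ≤ m + n + j + 2 * k) (hcube : 0 ≤ n + 3 * k)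
    {t s : valuationBall w 0} (ht : (t : F) ∈ valuationBall w j)
    (hs : (s : F) ∈ valuationBall w k) :
    cubicPhase w ψ a b (t + s) = cubicPhase w ψ a b t * ψ ((3 * a * (t : F) ^ 2 + b) * s) := by
  have hquad_mem : 3 * a * t * (s * s) ∈ valuationBall w 0 :=
    valuationBall_anti (by omega) (mul_mem_valuationBall (mul_mem_valuationBall
      (mul_mem_valuationBall h3 ha) ht) (mul_mem_valuationBall hs hs))
  have hcube_mem : a * (s * s * s) ∈ valuationBall w 0 :=
    valuationBall_anti (by omega) (mul_mem_valuationBall ha (mul_mem_valuationBall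
      (mul_mem_valuationBall hs hs) hs))
  rw [← mul_one (_ * _), ← hψ.eq_one _ (add_mem hquad_mem hcube_mem)]
  simp only [cubicPhase, ← ψ.map_add_eq_mul, AddSubgroup.coe_add]
  congr 1
  ring

theorem addValuation_cubicPhase_deriv {m n j : ℤ} (h3 : w 3 = m) (ha : w a = n) {t : F}
    (ht : w t = j) (hb : b ∈ valuationBall w (m + n + 2 * j + 1)) :
    w (3 * a * t ^ 2 + b) = (m + n + 2 * j : ℤ) := by
  have hlead : w (3 * a * t ^ 2) = (m + n + 2 * j : ℤ) := by
    rw [w.map_mul, w.map_mul, w.map_pow, h3, ha, ht]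
    norm_cast
  rw [← hlead]
  refine w.map_add_eq_of_lt_left (lt_of_lt_of_le ?_ hb)
  rw [hlead, WithTop.coe_lt_coe]
  omega

variable [MeasurableSpace (valuationBall w 0)] [MeasurableAdd (valuationBall w 0)]

/- The second difference of a cubic polynomial is affine linear, so that quotients of translates of
the phase are characters. -/
theorem measurable_integerChar_of_measurable_cubicPhase
    (hf : Measurable (cubicPhase w ψ a b)) {c : F} (hc : c ∈ valuationBall w 0) :
    Measurable (integerChar w ψ (6 * a * c)) := by
  set f := cubicPhase w ψ a b
  let s : valuationBall w 0 := ⟨c, hc⟩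
  let u : valuationBall w 0 := ⟨1, by simpa using natCast_mem_valuationBall 1⟩
  have hf_translate (r : valuationBall w 0) : Measurable fun t ↦ f (t + r) :=
    hf.comp (measurable_add_const r)
  have hdiff (t : valuationBall w 0) : integerChar w ψ (6 * a * c) t =
      f (t + (s + u)) * f t / (f (t + s) * f (t + u)) * ψ (-(3 * a * c * (1 + c))) := by
    simp only [f, cubicPhase, ← ψ.map_add_eq_mul, ← ψ.map_sub_eq_div]
    simp only [AddChar.compAddMonoidHom_apply, AddChar.mulShift_apply, AddSubgroup.coe_add,
      AddSubgroup.subtype_apply, s, u]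
    congr 1
    ring
  rw [funext hdiff]
  exact (((hf_translate _).mul hf).div ((hf_translate _).mul (hf_translate _))).mul_const _

variable {ν : Measure (valuationBall w 0)} [ν.IsAddLeftInvariant]

/- Translating by `s` of valuation `k` multiplies the phase by `ψ (θ * s)`, where the derivative `θ`
of the cubic has the constant valuation `-1 - k` on the shell. -/
theorem setIntegral_cubicPhase_shell_eq_zero (hψ : IsUnramifiedChar w ψ)
    (hint : Integrable (cubicPhase w ψ a b) ν) [Finite (valuationBall w 0 ⧸ integerBall w 1)]
    {m n j : ℤ} (h3 : w 3 = m) (ha : w a = n) (hb : b ^ 3 ∈ valuationBall w n) (hj0 : 0 ≤ j)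
    (hj : n + 3 * m + 3 * (j + 1) ≤ 0)
    (hS : MeasurableSet (integerBall w j \ integerBall w (j + 1) : Set (valuationBall w 0))) :
    ∫ t in (integerBall w j \ integerBall w (j + 1) : Set (valuationBall w 0)),
      cubicPhase w ψ a b t ∂ν = 0 := by
  have := Fintype.ofFinite (valuationBall w 0 ⧸ integerBall w 1)
  have hm : 0 ≤ m := nonneg_of_addValuation_natCast_eq (k := 3) (by simpa using h3)
  obtain ⟨k, hk⟩ : ∃ k : ℕ, (k : ℤ) = -n - 1 - m - 2 * j :=
    ⟨(-n - 1 - m - 2 * j).toNat, Int.toNat_of_nonneg (by omega)⟩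
  obtain ⟨p, hp⟩ := hψ.exists_addValuation_eq_natCast k
  have hpu (u : valuationBall w 0) : p * u ∈ valuationBall w k :=
    add_zero (k : ℤ) ▸ mul_mem_valuationBall (mem_valuationBall_of_eq hp) u.2
  let s (r : valuationBall w 0 ⧸ integerBall w 1) : valuationBall w 0 :=
    ⟨p * (r.out : valuationBall w 0), valuationBall_anti (by omega) (hpu _)⟩
  have hs_mem (i : ℤ) (hi : i ≤ k) (r) (t : valuationBall w 0) :
      t + s r ∈ integerBall w i ↔ t ∈ integerBall w i :=
    AddSubgroup.add_mem_cancel_right _ (valuationBall_anti hi (hpu _))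
  refine setIntegral_eq_zero_of_sum_translates_eq_zero hint hS s (fun r t ↦ ?_) fun t ht ↦ ?_
  · simp only [Set.mem_sdiff, SetLike.mem_coe, hs_mem j (by omega), hs_mem (j + 1) (by omega)]
  have htj : w (t : F) = j := eq_of_mem_valuationBall_of_notMem_succ ht.1 ht.2
  have hb' : b ∈ valuationBall w (m + n + 2 * j + 1) :=
    mem_valuationBall_of_pow_mem hb (by push_cast; omega)
  have hθ : w ((3 * a * (t : F) ^ 2 + b) * p) = (-1 : ℤ) := by
    rw [w.map_mul, addValuation_cubicPhase_deriv h3 ha htj hb', hp, ← WithTop.coe_add, hk]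
    congr 1
    omega
  have htranslate (r) : cubicPhase w ψ a b (t + s r) = cubicPhase w ψ a b t *
      ψ ((3 * a * (t : F) ^ 2 + b) * p * (r.out : valuationBall w 0)) := by
    rw [mul_assoc]
    exact cubicPhase_add hψ h3.ge ha.ge (by omega) (by omega) ht.1 (hpu _)
  simp only [htranslate, ← Finset.mul_sum, hψ.sum_residue_eq_zero hθ, mul_zero]

variable [IsFiniteMeasure ν]

/- A ball is the intersection of the kernels of the characters which are trivial on it. -/
theorem measurableSet_integerBall_of_measurable_cubicPhase (hψ : IsUnramifiedChar w ψ)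
    (hf : Measurable (cubicPhase w ψ a b)) {m n : ℤ} (h6a : w (6 * a) = m) (hmn : m + n ≤ 0)
    (hpos : 0 < ν (integerBall w n)) :
    MeasurableSet (integerBall w n : Set (valuationBall w 0)) := by
  refine measurableSet_addSubgroup_of_separated ν hpos fun t ht ↦ ?_
  obtain ⟨c, hc, hct⟩ := hψ.exists_mul_ne_one (mt mem_integerBall.mpr ht)
  have hc' : c / (6 * a) ∈ valuationBall w 0 :=
    valuationBall_anti (by omega) (div_mem_valuationBall hc h6a)
  have hmeas := measurable_integerChar_of_measurable_cubicPhase hf hc'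
  rw [mul_div_cancel₀ c (ne_zero_of_addValuation_eq_coe h6a)] at hmeas
  refine ⟨(integerChar w ψ c).toAddMonoidHom.ker, hmeas (measurableSet_singleton 1),
    fun s hs ↦ ?_, hct⟩
  exact hψ.eq_one _ (valuationBall_anti (by omega)
    (mul_mem_valuationBall hc (mem_integerBall.mp hs)))

theorem norm_eq_one_of_measurable_cubicPhase (hψ : IsUnramifiedChar w ψ)
    (hf : Measurable (cubicPhase w ψ a b)) (hpos : ∀ n : ℕ, 0 < ν (integerBall w n)) {n : ℤ}
    (ha : w a = n) {x : F} (hx : x ∈ valuationBall w n) : ‖ψ x‖ = 1 := by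
  have hc : x / a ∈ valuationBall w 0 := sub_self n ▸ div_mem_valuationBall hx ha
  set χ := integerChar w ψ (6 * a * (x / a))
  have hχ : Measurable χ := measurable_integerChar_of_measurable_cubicPhase hf hc
  have h6x : 6 * a * (x / a) = 6 * x := by
    rw [mul_assoc, mul_div_cancel₀ x (ne_zero_of_addValuation_eq_coe ha)]
  have h6x_mem : 6 * x ∈ valuationBall w (0 + n) :=
    mul_mem_valuationBall (by simpa using natCast_mem_valuationBall 6) hx
  have hker : integerBall w (-n).toNat ≤ χ.toAddMonoidHom.ker := fun t ht ↦
    hψ.eq_one _ (valuationBall_anti (by omega)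
      (mul_mem_valuationBall (h6x ▸ h6x_mem) (mem_integerBall.mp ht)))
  have hnorm := norm_addChar_eq_one_of_finiteIndex_ker χ
    (finiteIndex_of_measure_pos ν (hχ (measurableSet_singleton 1))
      ((hpos _).trans_le (measure_mono hker)))
    ⟨1, by simpa using natCast_mem_valuationBall 1⟩
  have hpow : χ ⟨1, by simpa using natCast_mem_valuationBall 1⟩ = ψ x ^ 6 := by
    rw [← ψ.map_nsmul_eq_pow]
    simp [χ, h6x]
  rw [hpow, norm_pow] at hnorm
  exact (pow_eq_one_iff_of_nonneg (norm_nonneg _) (by norm_num)).mp hnorm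

theorem norm_cubicPhase_eq_one (hψ : IsUnramifiedChar w ψ)
    (hf : Measurable (cubicPhase w ψ a b)) (hpos : ∀ n : ℕ, 0 < ν (integerBall w n)) {n : ℤ}
    (ha : w a = n) (hb : b ∈ valuationBall w n) (t : valuationBall w 0) :
    ‖cubicPhase w ψ a b t‖ = 1 := by
  refine norm_eq_one_of_measurable_cubicPhase hψ hf hpos ha ?_
  have hcube : a * (t * t * t) ∈ valuationBall w n := by
    simpa using mul_mem_valuationBall ha.ge
      (mul_mem_valuationBall (mul_mem_valuationBall t.2 t.2) t.2)
  have hlin : b * t ∈ valuationBall w n := by simpa using mul_mem_valuationBall hb t.2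
  convert add_mem hcube hlin using 2
  ring

theorem setIntegral_integerBall_cubicPhase (hψ : IsUnramifiedChar w ψ)
    (hf : Measurable (cubicPhase w ψ a b)) (hint : Integrable (cubicPhase w ψ a b) ν)
    (hpos : ∀ n : ℕ, 0 < ν (integerBall w n)) {m n : ℤ} (h2 : w 2 = (0 : ℤ)) (h3 : w 3 = m)
    (ha : w a = n) (hb : b ^ 3 ∈ valuationBall w n) {i : ℕ}
    (hi : i = 0 ∨ n + 3 * m + 3 * i ≤ 0) :
    ∫ t in (integerBall w i : Set (valuationBall w 0)), cubicPhase w ψ a b t ∂ν =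
      ∫ t, cubicPhase w ψ a b t ∂ν := by
  induction i with
  | zero => simp
  | succ i ih =>
    replace hi : n + 3 * m + 3 * (i + 1) ≤ 0 := by simpa using hi
    have hm : 0 ≤ m := nonneg_of_addValuation_natCast_eq (k := 3) (by simpa using h3)
    have h6a : w (6 * a) = (m + n : ℤ) := by
      rw [show 6 * a = 2 * (3 * a) by ring, w.map_mul, w.map_mul, h2, h3, ha]
      norm_cast
      rw [zero_add]
    have hmeas (k : ℕ) (hk : k ≤ i + 1) :
        MeasurableSet (integerBall w k : Set (valuationBall w 0)) :=
      measurableSet_integerBall_of_measurable_cubicPhase hψ hf h6a (by omega) (hpos k)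
    have hmeas_succ : MeasurableSet (integerBall w (i + 1) : Set (valuationBall w 0)) :=
      mod_cast hmeas (i + 1) le_rfl
    have : (integerBall w 1).FiniteIndex :=
      finiteIndex_of_measure_pos ν (hmeas 1 (by omega)) (hpos 1)
    have hshell := setIntegral_cubicPhase_shell_eq_zero hψ hint h3 ha hb i.cast_nonneg hi
      ((hmeas i (by omega)).diff hmeas_succ)
    have hsub : integerBall w (i + 1) ≤ integerBall w i := fun t ht ↦
      valuationBall_anti (by omega) (mem_integerBall.mp ht)
    rw [setIntegral_sdiff hmeas_succ hint.integrableOn hsub, sub_eq_zero] at hshell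
    rw [← ih (by omega), hshell, Nat.cast_succ]

theorem norm_integral_cubicPhase_le [ν.IsComplete] (hψ : IsUnramifiedChar w ψ)
    (hf : AEMeasurable (cubicPhase w ψ a b) ν) (hpos : ∀ n : ℕ, 0 < ν (integerBall w n))
    {m n : ℤ} (h2 : w 2 = (0 : ℤ)) (h3 : w 3 = m) (ha : w a = n) (hn : n ≤ 0)
    (hb : b ^ 3 ∈ valuationBall w n) {i : ℕ} (hi : i = 0 ∨ n + 3 * m + 3 * i ≤ 0) :
    ‖∫ t, cubicPhase w ψ a b t ∂ν‖ ≤ ν.real (integerBall w i) := by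
  replace hf := hf.nullMeasurable.measurable_of_complete
  have hb' : b ∈ valuationBall w n := mem_valuationBall_of_pow_mem hb (by push_cast; omega)
  have hnorm (t) : ‖cubicPhase w ψ a b t‖ ≤ 1 := (norm_cubicPhase_eq_one hψ hf hpos ha hb' t).le
  have hint : Integrable (cubicPhase w ψ a b) ν :=
    .of_bound hf.aestronglyMeasurable 1 (.of_forall hnorm)
  rw [← setIntegral_integerBall_cubicPhase hψ hf hint hpos h2 h3 ha hb hi]
  simpa using norm_setIntegral_le_of_norm_le_const (measure_lt_top ν _) fun t _ ↦ hnorm t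

end CubicPhase

section Transfer

variable {F : Type*} [Field F] [MeasurableSpace F] {μ : Measure F}

theorem outerComap_integerBall {w : AddValuation F (WithTop ℤ)} (n : ℕ) :
    outerComap μ (valuationBall w 0).subtype (integerBall w n) = μ (valuationBall w n) := by
  rw [outerComap_apply, image_coe_integerBall n.cast_nonneg]

theorem norm_setIntegral_addChar_cubic_le {w : AddValuation F (WithTop ℤ)} {ψ : AddChar F ℂ}
    (hψ : IsUnramifiedChar w ψ) (hμ : ∀ (x : F) (s : Set F), μ ((x + ·) ⁻¹' s) = μ s)
    (hpos : ∀ n : ℕ, 0 < μ (valuationBall w n)) (hfin : μ (valuationBall w 0) < ⊤) {a b : F}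
    {m n : ℤ} (h2 : w 2 = (0 : ℤ)) (h3 : w 3 = m) (ha : w a = n) (hn : n ≤ 0)
    (hb : b ^ 3 ∈ valuationBall w n) {i : ℕ} (hi : i = 0 ∨ n + 3 * m + 3 * i ≤ 0) :
    ‖∫ t in valuationBall w 0, ψ (a * t ^ 3 + b * t) ∂μ‖ ≤ μ.real (valuationBall w i) := by
  let ι := (valuationBall w 0).subtype
  let := caratheodoryComap μ ι
  have := measurableAdd_caratheodoryComap hμ ι
  have := isAddLeftInvariant_outerComap hμ ι
  have := isComplete_outerComap μ ι
  have hball (k : ℕ) : outerComap μ ι (integerBall w k) = μ (valuationBall w k) :=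
    outerComap_integerBall k
  have : IsFiniteMeasure (outerComap μ ι) := ⟨by simpa using (hball 0).trans_lt hfin⟩
  have hι : Measurable ι := measurable_caratheodoryComap μ ι
  have hmap : (outerComap μ ι).map ι = μ.restrict (valuationBall w 0) := by
    rw [map_outerComap, AddSubgroup.coe_subtype, Subtype.range_coe]
  by_cases hf : AEStronglyMeasurable (fun t ↦ ψ (a * t ^ 3 + b * t))
      (μ.restrict (valuationBall w 0))
  swap
  · rw [integral_undef fun h ↦ hf h.aestronglyMeasurable, norm_zero]
    exact measureReal_nonneg
  rw [← hmap] at hf ⊢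
  rw [integral_map hι.aemeasurable hf, Measure.real, ← hball]
  exact norm_integral_cubicPhase_le hψ (hf.aemeasurable.comp_measurable hι)
    (fun k ↦ (hball k).symm ▸ hpos k) h2 h3 ha hn hb hi

end Transfer

theorem rpow_mul_zpow_neg_toNat_le {q : ℝ} (hq : 1 ≤ q) (m n : ℤ) :
    q ^ (-(n : ℝ) / 3) * q ^ (-(((-n - 3 * m) / 3).toNat : ℤ)) ≤ q ^ (1 + (m : ℝ)) := by
  have hq0 : 0 < q := zero_lt_one.trans_le hq
  have hexp : (-n - 3 * ((-n - 3 * m) / 3).toNat : ℝ) ≤ 3 + 3 * m := by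
    have : -n - 3 * ((-n - 3 * m) / 3).toNat ≤ 3 + 3 * m := by omega
    exact_mod_cast this
  rw [← Real.rpow_intCast, ← Real.rpow_add hq0]
  refine Real.rpow_le_rpow_of_exponent_le hq ?_
  push_cast
  linarith

theorem stmt_6_general {F : Type*} [Field F] [MeasurableSpace F]
    (μ : Measure F) (v : F → ℤ) (q : ℝ) (ψ : F → ℂ)
    (hq : 1 < q) (h2 : (2 : F) ≠ 0) (h3 : (3 : F) ≠ 0)
    (hv_mul : ∀ x y : F, x ≠ 0 → y ≠ 0 → v (x * y) = v x + v y)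
    (hv_add : ∀ x y : F, x ≠ 0 → y ≠ 0 → x + y ≠ 0 → min (v x) (v y) ≤ v (x + y))
    (hodd : v 2 = 0)
    (hμ : ∀ n : ℤ, μ {x : F | x = 0 ∨ n ≤ v x} = ENNReal.ofReal (q ^ (-n)))
    (hμ_inv : ∀ (a : F) (s : Set F), μ ((a + ·) ⁻¹' s) = μ s)
    (hψ_add : ∀ x y : F, ψ (x + y) = ψ x * ψ y)
    (hψ_triv : ∀ x : F, (x = 0 ∨ 0 ≤ v x) → ψ x = 1)
    (hψ_nontriv : ∃ x : F, x ≠ 0 ∧ v x = -1 ∧ ψ x ≠ 1)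
    (a b : F) (ha0 : a ≠ 0) (ha : v a < 0) (hab : b = 0 ∨ v a ≤ 3 * v b) :
    ‖((Real.rpow q (-(v a : ℝ) / 3) : ℝ) : ℂ) *
        ∫ t in {t : F | t = 0 ∨ 0 ≤ v t}, ψ (a * t ^ 3 + b * t) ∂μ‖
      ≤ Real.rpow q (1 + (v 3 : ℝ)) := by
  have hq0 : 0 < q := zero_lt_one.trans hq
  let w := addValuationOfInt hv_mul hv_add
  let χ : AddChar F ℂ := ⟨ψ, hψ_triv 0 (.inl rfl), hψ_add⟩
  have hw {x : F} (hx : x ≠ 0) : w x = v x := addValuationOfInt_apply hv_mul hv_add hx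
  have hball (n : ℤ) : (valuationBall w n : Set F) = {x | x = 0 ∨ n ≤ v x} :=
    Set.ext fun _ ↦ mem_valuationBall_addValuationOfInt hv_mul hv_add
  have hχ : IsUnramifiedChar w χ := by
    obtain ⟨x, hx0, hx, hψx⟩ := hψ_nontriv
    exact ⟨fun y hy ↦ hψ_triv y ((hball 0).subset hy), x, by rw [hw hx0, hx], hψx⟩
  have hμ_ball (n : ℤ) : μ (valuationBall w n) = ENNReal.ofReal (q ^ (-n)) := by rw [hball, hμ]
  have hb : b ^ 3 ∈ valuationBall w (v a) := by
    rcases eq_or_ne b 0 with rfl | hb0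
    · simp
    rw [mem_valuationBall, w.map_pow, hw hb0]
    exact_mod_cast hab.resolve_left hb0
  have hbound := norm_setIntegral_addChar_cubic_le hχ hμ_inv
    (fun n ↦ by rw [hμ_ball, ENNReal.ofReal_pos]; positivity)
    (by simp [hμ_ball]) (by rw [hw h2, hodd]) (hw h3) (hw ha0) ha.le hb
    (i := ((-v a - 3 * v 3) / 3).toNat) (by omega)
  rw [Measure.real, hμ_ball, ENNReal.toReal_ofReal (by positivity), hball] at hbound
  rw [Real.rpow_eq_pow, Real.rpow_eq_pow, norm_mul, Complex.norm_real,
    Real.norm_of_nonneg (Real.rpow_nonneg hq0.le _)]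
  exact (mul_le_mul_of_nonneg_left hbound (Real.rpow_nonneg hq0.le _)).trans
    (rpow_mul_zpow_neg_toNat_le hq.le _ _)

/-- Part (3) of the Proposition on the p-adic Airy function
`Ai(a;b) := q^{-v(a)/3} ∫_{t ∈ O} ψ(a t³ + b t) dt` (with `v(a) < 0`): if
`(1/3) v(a) ≤ v(b)` (allowing `b = 0`), then `|Ai(a;b)| ≤ q^{1 + v(3)}`. -/
theorem stmt_6 {F : Type*} [Field F] [CharZero F] [MeasurableSpace F]
    (μ : Measure F) (v : F → ℤ) (q : ℝ) (ψ : F → ℂ)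
    (hq : 1 < q)
    (hv_mul : ∀ x y : F, x ≠ 0 → y ≠ 0 → v (x * y) = v x + v y)
    (hv_add : ∀ x y : F, x ≠ 0 → y ≠ 0 → x + y ≠ 0 → min (v x) (v y) ≤ v (x + y))
    (hodd : v 2 = 0)
    (hμ : ∀ n : ℤ, μ {x : F | x = 0 ∨ n ≤ v x} = ENNReal.ofReal (q ^ (-n)))
    (hμ_inv : ∀ (a : F) (s : Set F), μ ((a + ·) ⁻¹' s) = μ s)
    (hψ_add : ∀ x y : F, ψ (x + y) = ψ x * ψ y)
    (hψ_triv : ∀ x : F, (x = 0 ∨ 0 ≤ v x) → ψ x = 1)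
    (hψ_nontriv : ∃ x : F, x ≠ 0 ∧ v x = -1 ∧ ψ x ≠ 1)
    (a b : F) (ha0 : a ≠ 0) (ha : v a < 0) (hab : b = 0 ∨ v a ≤ 3 * v b) :
    ‖((Real.rpow q (-(v a : ℝ) / 3) : ℝ) : ℂ) *
        ∫ t in {t : F | t = 0 ∨ 0 ≤ v t}, ψ (a * t ^ 3 + b * t) ∂μ‖
      ≤ Real.rpow q (1 + (v 3 : ℝ)) := by
  exact stmt_6_general μ v q ψ hq two_ne_zero three_ne_zero hv_mul hv_add hodd hμ hμ_inv hψ_add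
    hψ_triv hψ_nontriv a b ha0 ha hab
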